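/- arXiv:2010.15320 — 4 statements merged into one kernel-verified Lean document; each statement's English description precedes it below -/
import Mathlib

section
/- Let n be a positive natural number and work in ℝⁿ with the Euclidean inner product ⟨·,·⟩ and norm ‖·‖. Let z, d ∈ ℝⁿ, let ρ ≥ 0 with ‖d‖ ≤ ρ, and let ξ > 0. Define the robust control term r ∈ ℝⁿ by r = −ρ z/‖z‖ if ‖z‖ > ξ, and r = −(ρ/ξ) z if ‖z‖ ≤ ξ. Then ⟨z, r + d⟩ ≤ ρ ξ / 4. -/
open scoped RealInnerProductSpace

/-- For `z, d ∈ ℝⁿ` with `‖d‖ ≤ ρ`, `ρ ≥ 0`, `ξ > 0`, and the robust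
control term `r = −ρ z/‖z‖` if `‖z‖ > ξ` and `r = −(ρ/ξ) z` if `‖z‖ ≤ ξ`, one has
`⟪z, r + d⟫ ≤ ρ ξ / 4`. -/
theorem robust_control_inner_bound
    (n : ℕ) (hn : 0 < n) (z d : EuclideanSpace ℝ (Fin n))
    (ρ : ℝ) (hρ : 0 ≤ ρ) (hd : ‖d‖ ≤ ρ) (ξ : ℝ) (hξ : 0 < ξ)
    (r : EuclideanSpace ℝ (Fin n))
    (hr : r = if ξ < ‖z‖ then (-(ρ / ‖z‖)) • z else (-(ρ / ξ)) • z) :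
    ⟪z, r + d⟫ ≤ ρ * ξ / 4 := by
  have h1 : ⟪z, d⟫ ≤ ‖z‖ * ρ :=
    (real_inner_le_norm z d).trans (mul_le_mul_of_nonneg_left hd (norm_nonneg z))
  rw [inner_add_right, hr]
  split_ifs with h
  · have hz : ‖z‖ ≠ 0 := (hξ.trans h).ne'
    rw [real_inner_smul_right, real_inner_self_eq_norm_sq]
    have h2 : -(ρ / ‖z‖) * ‖z‖ ^ 2 = -(‖z‖ * ρ) := by field_simp
    have h3 : 0 ≤ ρ * ξ := by positivity
    linarith
  · rw [real_inner_smul_right, real_inner_self_eq_norm_sq]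
    have h2 : ρ * ξ / 4 - (-(ρ / ξ) * ‖z‖ ^ 2 + ‖z‖ * ρ) = ρ / ξ * (‖z‖ - ξ / 2) ^ 2 := by
      field_simp
      ring
    have h3 : 0 ≤ ρ / ξ * (‖z‖ - ξ / 2) ^ 2 := by positivity
    linarith
end

section
/- Let F ∈ ℝ^{p×p}, G ∈ ℝ^{p×q} be real matrices, let L₁ ≥ 0 and σ ≥ 0, and let (Σ_i)_{i∈ℕ} be a sequence of p×p real matrices with Σ₀ = 0 and Σ_{i+1} = F Σ_i Fᵀ + G (J_i Σ_i J_iᵀ + S_i) Gᵀ, where for each i the matrices J_i ∈ ℝ^{q×p} and S_i ∈ ℝ^{q×q} satisfy ‖J_i‖ ≤ L₁ and ‖S_i‖ ≤ σ² (operator norms). Set a = ‖F‖² + ‖G‖² L₁² and assume a ≠ 1. Then for every i ≥ 0, ‖Σ_i‖ ≤ ((1 − aⁱ)/(1 − a)) · ‖G‖² σ². -/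
open Matrix

/-- The operator (spectral) norm of a real matrix, i.e. the operator norm of the
induced linear map between Euclidean spaces. -/
noncomputable def matOpNorm {m n : Type*} [Fintype m] [Fintype n] [DecidableEq n]
    (A : Matrix m n ℝ) : ℝ :=
  ‖LinearMap.toContinuousLinearMap (Matrix.toEuclideanLin A)‖

section helpers
open scoped Matrix.Norms.L2Operator

theorem mon_eq {m n : Type*} [Fintype m] [Fintype n] [DecidableEq n]
    (A : Matrix m n ℝ) : matOpNorm A = ‖A‖ := by
  rw [Matrix.l2_opNorm_def]; rfl

theorem mon_nonneg {m n : Type*} [Fintype m] [Fintype n] [DecidableEq n]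
    (A : Matrix m n ℝ) : 0 ≤ matOpNorm A := norm_nonneg _

theorem mon_zero {m n : Type*} [Fintype m] [Fintype n] [DecidableEq n] :
    matOpNorm (0 : Matrix m n ℝ) = 0 := by
  rw [mon_eq, norm_zero]

theorem mon_add {m n : Type*} [Fintype m] [Fintype n] [DecidableEq n]
    (A B : Matrix m n ℝ) : matOpNorm (A + B) ≤ matOpNorm A + matOpNorm B := by
  simp only [mon_eq]; exact norm_add_le _ _

theorem mon_conj {m n : Type*} [Fintype m] [Fintype n] [DecidableEq n] [DecidableEq m]
    (A : Matrix m n ℝ) (B : Matrix n n ℝ) :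
    matOpNorm (A * B * Aᵀ) ≤ matOpNorm A ^ 2 * matOpNorm B := by
  simp only [mon_eq]
  have h1 := Matrix.l2_opNorm_mul (A * B) Aᵀ
  have h2 := Matrix.l2_opNorm_mul A B
  have h3 : ‖Aᵀ‖ = ‖A‖ := by
    rw [← Matrix.l2_opNorm_conjTranspose A, Matrix.conjTranspose_eq_transpose_of_trivial]
  rw [h3] at h1
  nlinarith [norm_nonneg A]

end helpers

/-- covariance propagation bound.  With `Σ₀ = 0`,
`Σ_{i+1} = F Σ_i Fᵀ + G (J_i Σ_i J_iᵀ + S_i) Gᵀ`, `‖J_i‖ ≤ L₁`, `‖S_i‖ ≤ σ²`, and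
`a = ‖F‖² + ‖G‖² L₁² ≠ 1`, one has `‖Σ_i‖ ≤ ((1 − aⁱ)/(1 − a)) ‖G‖² σ²` for all `i`. -/
theorem covariance_propagation_bound
    (p q : ℕ) (F : Matrix (Fin p) (Fin p) ℝ) (G : Matrix (Fin p) (Fin q) ℝ)
    (L₁ σ : ℝ) (hL₁ : 0 ≤ L₁) (hσ : 0 ≤ σ)
    (S : ℕ → Matrix (Fin p) (Fin p) ℝ) (hS0 : S 0 = 0)
    (J : ℕ → Matrix (Fin q) (Fin p) ℝ) (W : ℕ → Matrix (Fin q) (Fin q) ℝ)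
    (hJ : ∀ i, matOpNorm (J i) ≤ L₁) (hW : ∀ i, matOpNorm (W i) ≤ σ ^ 2)
    (hrec : ∀ i, S (i + 1) = F * S i * Fᵀ + G * (J i * S i * (J i)ᵀ + W i) * Gᵀ)
    (a : ℝ) (ha : a = matOpNorm F ^ 2 + matOpNorm G ^ 2 * L₁ ^ 2) (hane : a ≠ 1) :
    ∀ i, matOpNorm (S i) ≤ (1 - a ^ i) / (1 - a) * (matOpNorm G ^ 2 * σ ^ 2) := by
  intro i
  have h1a : 1 - a ≠ 0 := sub_ne_zero.mpr (Ne.symm hane)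
  induction i with
  | zero => simp [hS0, mon_zero]
  | succ i ih =>
    have ha0 : 0 ≤ a := by rw [ha]; positivity
    have hs := mon_nonneg (S i)
    have e1 := mon_conj F (S i)
    have e2 := mon_conj G (J i * S i * (J i)ᵀ + W i)
    have e3 := mon_add (J i * S i * (J i)ᵀ) (W i)
    have e4 := mon_conj (J i) (S i)
    have e5 : matOpNorm (J i) ^ 2 * matOpNorm (S i) ≤ L₁ ^ 2 * matOpNorm (S i) :=
      mul_le_mul_of_nonneg_right (pow_le_pow_left₀ (mon_nonneg _) (hJ i) 2) hs
    have e6 : matOpNorm (J i * S i * (J i)ᵀ + W i) ≤ L₁ ^ 2 * matOpNorm (S i) + σ ^ 2 := by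
      linarith [hW i]
    have e7 := mul_le_mul_of_nonneg_left e6 (sq_nonneg (matOpNorm G))
    have e8 := mon_add (F * S i * Fᵀ) (G * (J i * S i * (J i)ᵀ + W i) * Gᵀ)
    have e9 := mul_le_mul_of_nonneg_left ih ha0
    have e10 : a * matOpNorm (S i) = matOpNorm F ^ 2 * matOpNorm (S i)
        + matOpNorm G ^ 2 * (L₁ ^ 2 * matOpNorm (S i)) := by rw [ha]; ring
    have e11 : (1 - a ^ (i + 1)) / (1 - a) * (matOpNorm G ^ 2 * σ ^ 2)
        = a * ((1 - a ^ i) / (1 - a) * (matOpNorm G ^ 2 * σ ^ 2))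
          + matOpNorm G ^ 2 * σ ^ 2 := by
      field_simp
      ring
    rw [hrec, e11]
    linarith
end

section
/- Let m be a positive natural number and Δt > 0. Consider the real block matrices F = [[I_m, Δt·I_m], [0, I_m]] ∈ ℝ^{2m×2m} and G = [[0], [Δt·I_m]] ∈ ℝ^{2m×m}. Then the operator (spectral) norms are ‖F‖ = √(1 + (Δt/2)(Δt + √(Δt² + 4))) and ‖G‖ = Δt. -/
open Matrix

lemma matOpNorm_eq_sqrt_aux {m n : Type*} [Fintype m] [Fintype n] [DecidableEq n]
    (A : Matrix m n ℝ) (c : ℝ)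
    (h1 : ∀ x : n → ℝ, ∑ i, ((A *ᵥ x) i) ^ 2 ≤ c * ∑ i, x i ^ 2)
    (x : n → ℝ) (hx : 0 < ∑ i, x i ^ 2)
    (h2 : ∑ i, ((A *ᵥ x) i) ^ 2 = c * ∑ i, x i ^ 2) :
    matOpNorm A = Real.sqrt c := by
  have hc : 0 ≤ c := by
    by_contra hc
    have h3 : 0 ≤ ∑ i, ((A *ᵥ x) i) ^ 2 := Finset.sum_nonneg fun _ _ => sq_nonneg _
    nlinarith
  unfold matOpNorm
  apply le_antisymm
  · refine ContinuousLinearMap.opNorm_le_bound _ (Real.sqrt_nonneg _) fun y => ?_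
    rw [EuclideanSpace.norm_eq, EuclideanSpace.norm_eq, ← Real.sqrt_mul hc]
    apply Real.sqrt_le_sqrt
    simpa [Real.norm_eq_abs, sq_abs] using h1 y.ofLp
  · have h := ContinuousLinearMap.le_opNorm
      (LinearMap.toContinuousLinearMap (Matrix.toEuclideanLin A)) (WithLp.toLp 2 x)
    have e1 : ‖LinearMap.toContinuousLinearMap (Matrix.toEuclideanLin A) (WithLp.toLp 2 x)‖
        = Real.sqrt c * Real.sqrt (∑ i, x i ^ 2) := by
      rw [← Real.sqrt_mul hc, ← h2, EuclideanSpace.norm_eq]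
      simp [Real.norm_eq_abs, sq_abs]
    have e2 : ‖WithLp.toLp 2 x‖ = Real.sqrt (∑ i, x i ^ 2) := by
      rw [EuclideanSpace.norm_eq]
      simp [Real.norm_eq_abs, sq_abs]
    rw [e1, e2] at h
    exact le_of_mul_le_mul_right h (Real.sqrt_pos.mpr hx)

/-- for the double-integrator discretization matrices
`F = [[I, Δt I], [0, I]]` and `G = [[0], [Δt I]]`, the operator (spectral) norms are
`‖F‖ = √(1 + (Δt/2)(Δt + √(Δt² + 4)))` and `‖G‖ = Δt`. -/
theorem double_integrator_matrix_norms
    (m : ℕ) (hm : 0 < m) (Δt : ℝ) (hΔt : 0 < Δt)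
    (F : Matrix (Fin m ⊕ Fin m) (Fin m ⊕ Fin m) ℝ)
    (G : Matrix (Fin m ⊕ Fin m) (Fin m) ℝ)
    (hF : F = Matrix.fromBlocks (1 : Matrix (Fin m) (Fin m) ℝ)
      (Δt • (1 : Matrix (Fin m) (Fin m) ℝ)) 0 (1 : Matrix (Fin m) (Fin m) ℝ))
    (hG : G = Matrix.fromRows (0 : Matrix (Fin m) (Fin m) ℝ)
      (Δt • (1 : Matrix (Fin m) (Fin m) ℝ))) :
    matOpNorm F = Real.sqrt (1 + Δt / 2 * (Δt + Real.sqrt (Δt ^ 2 + 4))) ∧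
    matOpNorm G = Δt := by
  have hm' : (0 : ℝ) < m := by exact_mod_cast hm
  constructor
  · set s := Real.sqrt (Δt ^ 2 + 4) with hs
    have hs2 : s ^ 2 = Δt ^ 2 + 4 := Real.sq_sqrt (by positivity)
    have hs0 : 0 ≤ s := Real.sqrt_nonneg _
    obtain ⟨k, hk⟩ : ∃ k, k = Δt / 2 * (Δt + s) := ⟨_, rfl⟩
    have hk0 : 0 < k := by rw [hk]; positivity
    have hkk : k * (k - Δt ^ 2) = Δt ^ 2 := by
      rw [hk]; linear_combination (Δt ^ 2 / 4) * hs2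
    rw [← hk]
    have hl : ∀ (x : Fin m ⊕ Fin m → ℝ) (i : Fin m),
        (F *ᵥ x) (Sum.inl i) = x (Sum.inl i) + Δt * x (Sum.inr i) := by
      intro x i
      rw [hF, Matrix.fromBlocks_mulVec]
      simp [Matrix.smul_mulVec]
    have hr : ∀ (x : Fin m ⊕ Fin m → ℝ) (i : Fin m),
        (F *ᵥ x) (Sum.inr i) = x (Sum.inr i) := by
      intro x i
      rw [hF, Matrix.fromBlocks_mulVec]
      simp
    refine matOpNorm_eq_sqrt_aux F (1 + k) ?_ (Sum.elim (fun _ => Δt) (fun _ => k)) ?_ ?_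
    · intro x
      simp only [Fintype.sum_sum_type, hl, hr]
      rw [← Finset.sum_add_distrib, ← Finset.sum_add_distrib, Finset.mul_sum]
      refine Finset.sum_le_sum fun i _ => ?_
      generalize x (Sum.inl i) = a
      generalize x (Sum.inr i) = b
      have key : k * ((1 + k) * (a ^ 2 + b ^ 2) - ((a + Δt * b) ^ 2 + b ^ 2))
          = (k * a - Δt * b) ^ 2 := by
        linear_combination b ^ 2 * hkk
      have := nonneg_of_mul_nonneg_right (key ▸ sq_nonneg (k * a - Δt * b)) hk0
      linarith
    · simp only [Fintype.sum_sum_type, Sum.elim_inl, Sum.elim_inr, Finset.sum_const,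
        Finset.card_univ, Fintype.card_fin, nsmul_eq_mul]
      positivity
    · simp only [Fintype.sum_sum_type, hl, hr, Sum.elim_inl, Sum.elim_inr, Finset.sum_const,
        Finset.card_univ, Fintype.card_fin, nsmul_eq_mul]
      linear_combination (-(m : ℝ) * k) * hkk
  · have hl : ∀ (x : Fin m → ℝ) (i : Fin m), (G *ᵥ x) (Sum.inl i) = 0 := by
      intro x i
      rw [hG, Matrix.fromRows_mulVec]
      simp
    have hr : ∀ (x : Fin m → ℝ) (i : Fin m), (G *ᵥ x) (Sum.inr i) = Δt * x i := by
      intro x i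
      rw [hG, Matrix.fromRows_mulVec]
      simp [Matrix.smul_mulVec]
    have he : ∀ x : Fin m → ℝ, ∑ i, ((G *ᵥ x) i) ^ 2 = Δt ^ 2 * ∑ i, x i ^ 2 := by
      intro x
      simp [Fintype.sum_sum_type, hl, hr, mul_pow, Finset.mul_sum]
    rw [matOpNorm_eq_sqrt_aux G (Δt ^ 2) (fun x => (he x).le) (fun _ => 1) (by simpa using hm)
      (he _), Real.sqrt_sq hΔt.le]
end

section
/- Let R and R* be symmetric positive definite n×n real matrices with λ_max(R) < λ_min(R*), and set λ_R = 2λ_min(R*)/(λ_min(R*) − λ_max(R)). Then for all vectors w, w_d ∈ ℝⁿ with ‖w‖ ≥ λ_R·‖w_d‖ (Euclidean norm), one has wᵀ R w ≤ (w − w_d)ᵀ R* (w − w_d). -/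
open Matrix

lemma quad_diag {n : ℕ} {A : Matrix (Fin n) (Fin n) ℝ} (hA : A.IsHermitian) (x : Fin n → ℝ) :
    ∃ y : Fin n → ℝ, x ⬝ᵥ (A *ᵥ x) = ∑ i, hA.eigenvalues i * y i ^ 2 ∧
      ∑ i, x i ^ 2 = ∑ i, y i ^ 2 := by
  set U : Matrix (Fin n) (Fin n) ℝ := (hA.eigenvectorUnitary : Matrix (Fin n) (Fin n) ℝ) with hU
  have hUU : U * Uᵀ = 1 := by
    have := Unitary.mul_star_self_of_mem hA.eigenvectorUnitary.2
    simpa [star_eq_conjTranspose] using this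
  have hsp : A = U * diagonal hA.eigenvalues * Uᵀ := by
    have := hA.spectral_theorem
    rw [Unitary.conjStarAlgAut_apply] at this
    simpa [star_eq_conjTranspose, Function.comp_def] using this
  refine ⟨Uᵀ *ᵥ x, ?_, ?_⟩
  · have h1 : x ⬝ᵥ (A *ᵥ x) = (Uᵀ *ᵥ x) ⬝ᵥ (diagonal hA.eigenvalues *ᵥ (Uᵀ *ᵥ x)) := by
      conv_lhs => rw [hsp]
      rw [← mulVec_mulVec, ← mulVec_mulVec, dotProduct_mulVec, ← mulVec_transpose]
    rw [h1]
    simp only [dotProduct, mulVec_diagonal]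
    exact Finset.sum_congr rfl fun i _ => by ring
  · have h1 : x ⬝ᵥ x = (Uᵀ *ᵥ x) ⬝ᵥ (Uᵀ *ᵥ x) := by
      rw [mulVec_transpose, ← dotProduct_mulVec, ← mulVec_transpose, mulVec_mulVec, hUU,
        one_mulVec]
    simpa only [dotProduct, ← sq] using h1

/-- For symmetric positive definite matrices `R, R*` with
`λ_max(R) < λ_min(R*)` and `λ_R = 2λ_min(R*)/(λ_min(R*) − λ_max(R))`, every pair of
vectors with `‖w‖ ≥ λ_R ‖w_d‖` (Euclidean norm) satisfies
`wᵀ R w ≤ (w − w_d)ᵀ R* (w − w_d)`. -/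
theorem weighted_input_cost_comparison
    (n : ℕ) (hn : 0 < n) (R Rs : Matrix (Fin n) (Fin n) ℝ)
    (hR : R.PosDef) (hRs : Rs.PosDef)
    (lmaxR lminRs : ℝ)
    (hlmax : lmaxR = ⨆ i, hR.isHermitian.eigenvalues i)
    (hlmin : lminRs = ⨅ i, hRs.isHermitian.eigenvalues i)
    (hlt : lmaxR < lminRs)
    (lamR : ℝ) (hlamR : lamR = 2 * lminRs / (lminRs - lmaxR))
    (w wd : Fin n → ℝ)
    (hw : lamR * Real.sqrt (∑ i, wd i ^ 2) ≤ Real.sqrt (∑ i, w i ^ 2)) :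
    w ⬝ᵥ (R *ᵥ w) ≤ (w - wd) ⬝ᵥ (Rs *ᵥ (w - wd)) := by
  have hne : Nonempty (Fin n) := ⟨⟨0, hn⟩⟩
  have hmax : ∀ i, hR.isHermitian.eigenvalues i ≤ lmaxR := fun i => by
    rw [hlmax]; exact le_ciSup (Set.finite_range _).bddAbove i
  have hmin : ∀ i, lminRs ≤ hRs.isHermitian.eigenvalues i := fun i => by
    rw [hlmin]; exact ciInf_le (Set.finite_range _).bddBelow i
  have ha : 0 < lmaxR := lt_of_lt_of_le (hR.eigenvalues_pos ⟨0, hn⟩) (hmax _)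
  have h1 : w ⬝ᵥ (R *ᵥ w) ≤ lmaxR * ∑ i, w i ^ 2 := by
    obtain ⟨y, e1, e2⟩ := quad_diag hR.isHermitian w
    rw [e1, e2, Finset.mul_sum]
    exact Finset.sum_le_sum fun i _ => mul_le_mul_of_nonneg_right (hmax i) (sq_nonneg _)
  have h2 : lminRs * ∑ i, (w - wd) i ^ 2 ≤ (w - wd) ⬝ᵥ (Rs *ᵥ (w - wd)) := by
    obtain ⟨y, e1, e2⟩ := quad_diag hRs.isHermitian (w - wd)
    rw [e1, e2, Finset.mul_sum]
    exact Finset.sum_le_sum fun i _ => mul_le_mul_of_nonneg_right (hmin i) (sq_nonneg _)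
  refine h1.trans (le_trans ?_ h2)
  have hcs := Real.sum_mul_le_sqrt_mul_sqrt Finset.univ w wd
  have hexp : ∑ i, (w - wd) i ^ 2 = ∑ i, w i ^ 2 - 2 * ∑ i, w i * wd i + ∑ i, wd i ^ 2 := by
    rw [Finset.mul_sum, ← Finset.sum_sub_distrib, ← Finset.sum_add_distrib]
    exact Finset.sum_congr rfl fun i _ => by simp only [Pi.sub_apply]; ring
  have hW := Real.sq_sqrt (Finset.sum_nonneg fun i (_ : i ∈ Finset.univ) => sq_nonneg (w i))
  have hD := Real.sq_sqrt (Finset.sum_nonneg fun i (_ : i ∈ Finset.univ) => sq_nonneg (wd i))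
  rw [hexp]
  have hW0 := Real.sqrt_nonneg (∑ i, w i ^ 2)
  have hD0 := Real.sqrt_nonneg (∑ i, wd i ^ 2)
  rw [← hW, ← hD]
  generalize Real.sqrt (∑ i, w i ^ 2) = W at *
  generalize Real.sqrt (∑ i, wd i ^ 2) = D at *
  generalize ∑ i, w i * wd i = c at *
  have hb : 0 < lminRs := ha.trans hlt
  have hw' : 2 * lminRs * D ≤ W * (lminRs - lmaxR) := by
    rw [hlamR, div_mul_eq_mul_div, div_le_iff₀ (by linarith)] at hw
    exact hw
  have h3 : lminRs * (W - D) ^ 2 ≤ lminRs * (W ^ 2 - 2 * c + D ^ 2) :=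
    mul_le_mul_of_nonneg_left (by nlinarith) hb.le
  refine le_trans ?_ h3
  have h4 : (lmaxR + lminRs) * W ≤ 2 * lminRs * (W - D) := by nlinarith
  have h5 : ((lmaxR + lminRs) * W) ^ 2 ≤ (2 * lminRs * (W - D)) ^ 2 :=
    pow_le_pow_left₀ (by positivity) h4 2
  have h6 : 4 * lminRs * (lmaxR * W ^ 2) ≤ 4 * lminRs * (lminRs * (W - D) ^ 2) := by
    nlinarith [sq_nonneg ((lminRs - lmaxR) * W)]
  exact le_of_mul_le_mul_left h6 (by positivity)
end
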